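/- For every δ > 0 there exists an infinitely differentiable function χ_δ : ℝ → ℝ such that: (i) 0 ≤ χ_δ(t) ≤ 1 for all t ∈ ℝ, χ_δ ≡ 1 on some neighborhood of 0, and χ_δ(t) = 0 whenever |t| ≥ δ; (ii) |χ_δ'(t)| ≤ δ·|t|^{−1} and |χ_δ''(t)| ≤ δ·t^{−2} for all t ≠ 0. (Lemma 3.4 of the paper: existence of logarithmic cutoff functions.) -/

import Mathlib

theorem cutoff_aux_bound : ∃ M : ℝ, 0 < M ∧ ∀ x : ℝ, |deriv Real.smoothTransition x| ≤ M ∧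
    |deriv (deriv Real.smoothTransition) x| ≤ M := by
  have hS : ContDiff ℝ 2 Real.smoothTransition :=
    Real.smoothTransition.contDiff (n := 2)
  have h1 : ContDiff ℝ 1 (deriv Real.smoothTransition) :=
    ContDiff.deriv' (n := 1) (by simpa [one_add_one_eq_two] using hS)
  have h2 : Continuous (deriv (deriv Real.smoothTransition)) := h1.continuous_deriv le_rfl
  have z1 : ∀ x : ℝ, x ∉ Set.Icc (0:ℝ) 1 → deriv Real.smoothTransition x = 0 := by
    intro x hx
    by_cases h0 : x < 0
    · have : Real.smoothTransition =ᶠ[nhds x] fun _ => (0:ℝ) := by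
        filter_upwards [Iio_mem_nhds h0] with y hy
        exact Real.smoothTransition.zero_of_nonpos (le_of_lt hy)
      rw [this.deriv_eq]; simp
    · have h1 : 1 < x := by
        by_contra h
        exact hx ⟨not_lt.1 h0, not_lt.1 h⟩
      have : Real.smoothTransition =ᶠ[nhds x] fun _ => (1:ℝ) := by
        filter_upwards [Ioi_mem_nhds h1] with y hy
        exact Real.smoothTransition.one_of_one_le (le_of_lt hy)
      rw [this.deriv_eq]; simp
  have z2 : ∀ x : ℝ, x ∉ Set.Icc (0:ℝ) 1 → deriv (deriv Real.smoothTransition) x = 0 := by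
    intro x hx
    have : deriv Real.smoothTransition =ᶠ[nhds x] fun _ => (0:ℝ) := by
      filter_upwards [isClosed_Icc.isOpen_compl.mem_nhds hx] with y hy
      exact z1 y hy
    rw [this.deriv_eq]; simp
  obtain ⟨A, hA⟩ := (isCompact_Icc (a := (0:ℝ)) (b := 1)).exists_bound_of_continuousOn
    h1.continuous.continuousOn
  obtain ⟨B, hB⟩ := (isCompact_Icc (a := (0:ℝ)) (b := 1)).exists_bound_of_continuousOn
    h2.continuousOn
  refine ⟨max 1 (max A B), by positivity, fun x => ?_⟩
  by_cases hx : x ∈ Set.Icc (0:ℝ) 1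
  · exact ⟨(hA x hx).trans (by simp), (hB x hx).trans (by simp)⟩
  · rw [z1 x hx, z2 x hx]
    simp

/-- Lemma 3.4: existence of logarithmic cutoff functions. For every `δ > 0` there is a
smooth function `χ : ℝ → ℝ` with `0 ≤ χ ≤ 1`, `χ ≡ 1` near `0`, `χ = 0` for `|t| ≥ δ`,
and `|χ'(t)| ≤ δ |t|⁻¹`, `|χ''(t)| ≤ δ t⁻²` for all `t ≠ 0`. -/
theorem cutoff_exists (δ : ℝ) (hδ : 0 < δ) :
    ∃ χ : ℝ → ℝ, ContDiff ℝ (⊤ : ℕ∞) χ ∧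
      (∀ t, 0 ≤ χ t ∧ χ t ≤ 1) ∧
      (∃ ε > 0, ∀ t : ℝ, |t| ≤ ε → χ t = 1) ∧
      (∀ t : ℝ, δ ≤ |t| → χ t = 0) ∧
      (∀ t : ℝ, t ≠ 0 → |deriv χ t| ≤ δ * |t|⁻¹ ∧ |deriv (deriv χ) t| ≤ δ * (t ^ 2)⁻¹) := by
  obtain ⟨M, hM, hb⟩ := cutoff_aux_bound
  obtain ⟨c, hc, hc1, hcM⟩ : ∃ c : ℝ, 0 < c ∧ c ≤ 1 ∧ c * M ≤ δ / 2 := by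
    refine ⟨min 1 (δ / (2 * M)), by positivity, min_le_left _ _, ?_⟩
    calc _ ≤ δ / (2 * M) * M := by gcongr; exact min_le_right _ _
      _ = δ / 2 := by field_simp
  set S := Real.smoothTransition with hSdef
  have hS : ContDiff ℝ (⊤ : ℕ∞) S := Real.smoothTransition.contDiff
  have hS2 : ContDiff ℝ 2 S := Real.smoothTransition.contDiff (n := 2)
  have hS1 : ContDiff ℝ 1 (deriv S) :=
    ContDiff.deriv' (n := 1) (by simpa [one_add_one_eq_two] using hS2)
  let u : ℝ → ℝ := fun t => c * (Real.log δ - Real.log t)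
  let χ : ℝ → ℝ := fun t => if t = 0 then 1 else S (u t)
  have hχ0 : χ 0 = 1 := by simp [χ]
  have hχ : ∀ t, t ≠ 0 → χ t = S (u t) := fun t ht => by simp [χ, ht]
  have hev : ∀ t, t ≠ 0 → χ =ᶠ[nhds t] fun s => S (u s) := fun t ht => by
    filter_upwards [isOpen_ne.mem_nhds ht] with s hs using hχ s hs
  have hu : ∀ t, t ≠ 0 → HasDerivAt u (c * (-t⁻¹)) t := fun t ht => by
    have := ((Real.hasDerivAt_log ht).const_sub (Real.log δ)).const_mul c
    exact this
  have hone : ∀ t : ℝ, |t| ≤ δ * Real.exp (-(1 / c)) → χ t = 1 := by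
    intro t ht
    by_cases h0 : t = 0
    · rw [h0, hχ0]
    rw [hχ t h0]
    apply Real.smoothTransition.one_of_one_le
    have h := Real.log_le_log (abs_pos.2 h0) ht
    rw [Real.log_abs, Real.log_mul hδ.ne' (Real.exp_pos _).ne', Real.log_exp] at h
    have h3 : 1 / c ≤ Real.log δ - Real.log t := by linarith
    calc (1:ℝ) = c * (1 / c) := by field_simp
      _ ≤ u t := mul_le_mul_of_nonneg_left h3 hc.le
  have hε : 0 < δ * Real.exp (-(1 / c)) := by positivity
  have d1 : ∀ t, t ≠ 0 → deriv χ t = deriv S (u t) * (c * (-t⁻¹)) := fun t ht => by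
    rw [(hev t ht).deriv_eq]
    exact (((hS2.differentiable (by norm_num)) (u t)).hasDerivAt.comp t (hu t ht)).deriv
  have d2 : ∀ t, t ≠ 0 → deriv (deriv χ) t =
      (deriv (deriv S) (u t) * c * c + deriv S (u t) * c) * (t ^ 2)⁻¹ := fun t ht => by
    have e : deriv χ =ᶠ[nhds t] fun s => deriv S (u s) * (c * (-s⁻¹)) := by
      filter_upwards [isOpen_ne.mem_nhds ht] with s hs using d1 s hs
    rw [e.deriv_eq]
    have a := ((hS1.differentiable (by norm_num)) (u t)).hasDerivAt.comp t (hu t ht)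
    have b := ((hasDerivAt_inv ht).neg).const_mul c
    have := (a.mul b).deriv
    refine Eq.trans this ?_
    simp only [Function.comp, Pi.neg_apply]
    field_simp
  refine ⟨χ, ?_, ?_, ⟨_, hε, hone⟩, ?_, ?_⟩
  · rw [contDiff_iff_contDiffAt]
    intro t
    by_cases ht : t = 0
    · have : χ =ᶠ[nhds t] fun _ => (1:ℝ) := by
        filter_upwards [Metric.ball_mem_nhds t hε] with s hs
        apply hone
        rw [ht, Metric.mem_ball, Real.dist_eq, sub_zero] at hs
        exact hs.le
      exact contDiffAt_const.congr_of_eventuallyEq this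
    · refine ContDiffAt.congr_of_eventuallyEq ?_ (hev t ht)
      exact hS.contDiffAt.comp t
        (contDiffAt_const.mul (contDiffAt_const.sub (Real.contDiffAt_log.2 ht)))
  · intro t
    by_cases ht : t = 0
    · rw [ht, hχ0]; norm_num
    · rw [hχ t ht]
      exact ⟨Real.smoothTransition.nonneg _, Real.smoothTransition.le_one _⟩
  · intro t ht
    have h0 : t ≠ 0 := abs_pos.1 (hδ.trans_le ht)
    rw [hχ t h0]
    apply Real.smoothTransition.zero_of_nonpos
    have h := Real.log_le_log hδ ht
    rw [Real.log_abs] at h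
    exact mul_nonpos_of_nonneg_of_nonpos hc.le (by linarith)
  · intro t ht
    obtain ⟨b1, b2⟩ := hb (u t)
    have k1 : |deriv S (u t)| * c ≤ δ / 2 :=
      (mul_le_mul_of_nonneg_right b1 hc.le).trans (by linarith)
    have k2 : |deriv (deriv S) (u t)| * c ≤ δ / 2 :=
      (mul_le_mul_of_nonneg_right b2 hc.le).trans (by linarith)
    constructor
    · rw [d1 t ht, abs_mul, abs_mul, abs_neg, abs_inv, abs_of_pos hc, ← mul_assoc]
      gcongr
      linarith
    · rw [d2 t ht, abs_mul, abs_of_nonneg (by positivity : 0 ≤ (t ^ 2)⁻¹)]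
      gcongr
      refine (abs_add_le _ _).trans ?_
      rw [abs_mul, abs_mul, abs_mul, abs_of_pos hc]
      have : |deriv (deriv S) (u t)| * c * c ≤ |deriv (deriv S) (u t)| * c :=
        mul_le_of_le_one_right (by positivity) hc1
      linarith
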